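/- Let X be a compact Hausdorff topological space, f : X → X a minimal homeomorphism, and K ⊆ X a compact set with nonempty interior. For x ∈ X set ℓ⁺(x) = min{j ≥ 0 : f^j(x) ∈ int K}, ℓ⁻(x) = min{j > 0 : f^{-j}(x) ∈ int K}, L(x) = {j ∈ ℤ : −ℓ⁻(x) < j < ℓ⁺(x) and f^j(x) ∈ ∂K}, and X_i = {x ∈ X : #L(x) ≥ i} for i = 0, 1, 2, …. Then the function ℓ⁺ is locally constant on each set X_i \ X_{i+1}: for every x ∈ X_i \ X_{i+1} there is an open neighborhood U of x such that every y ∈ U ∩ (X_i \ X_{i+1}) satisfies ℓ⁺(y) = ℓ⁺(x). -/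

import Mathlib

/-- `ℓ⁺(x) = min {j ≥ 0 : f^j(x) ∈ int K}`. -/
noncomputable def ellPlus {X : Type*} [TopologicalSpace X] (f : X ≃ₜ X) (K : Set X)
    (x : X) : ℕ :=
  sInf {j : ℕ | (⇑f)^[j] x ∈ interior K}

/-- `ℓ⁻(x) = min {j > 0 : f^{-j}(x) ∈ int K}`. -/
noncomputable def ellMinus {X : Type*} [TopologicalSpace X] (f : X ≃ₜ X) (K : Set X)
    (x : X) : ℕ :=
  sInf {j : ℕ | 0 < j ∧ (⇑f.symm)^[j] x ∈ interior K}

/-- `L(x) = {j ∈ ℤ : -ℓ⁻(x) < j < ℓ⁺(x), f^j(x) ∈ ∂K}`. -/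
noncomputable def Lset {X : Type*} [TopologicalSpace X] (f : X ≃ₜ X) (K : Set X)
    (x : X) : Set ℤ :=
  {j : ℤ | -(ellMinus f K x : ℤ) < j ∧ j < (ellPlus f K x : ℤ) ∧
    (f.toEquiv ^ j) x ∈ frontier K}

/-- `X_i = {x ∈ X : #L(x) ≥ i}`, the dynamical stratification associated to `K`. -/
noncomputable def stratum {X : Type*} [TopologicalSpace X] (f : X ≃ₜ X) (K : Set X)
    (i : ℕ) : Set X :=
  {x : X | i ≤ (Lset f K x).ncard}

theorem zpow_natCast_apply_aux {X : Type*} [TopologicalSpace X] (f : X ≃ₜ X) (j : ℕ) (x : X) :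
    (f.toEquiv ^ (j : ℤ)) x = (⇑f)^[j] x := by
  rw [zpow_natCast, ← Equiv.Perm.iterate_eq_pow]
  rfl

theorem zpow_neg_apply_aux {X : Type*} [TopologicalSpace X] (f : X ≃ₜ X) (j : ℕ) (x : X) :
    (f.toEquiv ^ (-(j : ℤ))) x = (⇑f.symm)^[j] x := by
  rw [zpow_neg, zpow_natCast, ← inv_pow, ← Equiv.Perm.iterate_eq_pow]
  rfl

theorem zpow_continuous_aux {X : Type*} [TopologicalSpace X] (f : X ≃ₜ X) (n : ℤ) :
    Continuous (fun x => (f.toEquiv ^ n) x) := by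
  obtain ⟨j, rfl | rfl⟩ := n.eq_nat_or_neg
  · simp only [zpow_natCast_apply_aux]
    exact f.continuous.iterate j
  · simp only [zpow_neg_apply_aux]
    exact f.symm.continuous.iterate j

theorem exists_bound_aux {X : Type*} [TopologicalSpace X] [CompactSpace X] (f : X ≃ₜ X)
    (hmin : ∀ x : X, Dense (Set.range fun n : ℤ => (f.toEquiv ^ n) x))
    (V : Set X) (hV : IsOpen V) (hne : V.Nonempty) :
    ∃ N : ℕ, ∀ x : X, ∃ n : ℤ, -(N : ℤ) ≤ n ∧ n ≤ N ∧ (f.toEquiv ^ n) x ∈ V := by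
  obtain ⟨t, ht⟩ := isCompact_univ.elim_finite_subcover
    (fun n : ℤ => (fun x => (f.toEquiv ^ n) x) ⁻¹' V)
    (fun n => hV.preimage (zpow_continuous_aux f n)) (by
      intro x _
      obtain ⟨_, hy, n, rfl⟩ := (hmin x).inter_open_nonempty V hV hne
      exact Set.mem_iUnion.2 ⟨n, hy⟩)
  refine ⟨t.sup Int.natAbs, fun x => ?_⟩
  obtain ⟨n, hn, hx⟩ := Set.mem_iUnion₂.1 (ht (Set.mem_univ x))
  have : n.natAbs ≤ t.sup Int.natAbs := Finset.le_sup (f := Int.natAbs) hn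
  exact ⟨n, by omega, by omega, hx⟩

/-- (Lemma 3.1 of the paper.) The function `ℓ⁺` is locally constant on
each set `X_i \ X_{i+1}` of the dynamical stratification. -/
theorem ellPlus_locally_constant_on_strata
    {X : Type*} [TopologicalSpace X] [CompactSpace X] [T2Space X]
    (f : X ≃ₜ X)
    (hmin : ∀ x : X, Dense (Set.range fun n : ℤ => (f.toEquiv ^ n) x))
    (K : Set X) (hKc : IsCompact K) (hK : (interior K).Nonempty) :
    ∀ i : ℕ, ∀ x ∈ stratum f K i \ stratum f K (i + 1),
      ∃ U : Set X, IsOpen U ∧ x ∈ U ∧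
        ∀ y ∈ U ∩ (stratum f K i \ stratum f K (i + 1)),
          ellPlus f K y = ellPlus f K x := by
  intro i x hx
  obtain ⟨N, hN⟩ := exists_bound_aux f hmin (interior K) isOpen_interior hK
  have hP : ∀ x, {j : ℕ | (⇑f)^[j] x ∈ interior K}.Nonempty := by
    intro x
    obtain ⟨n, h1, h2, h3⟩ := hN ((f.toEquiv ^ (N : ℤ)) x)
    rw [← Equiv.Perm.mul_apply, ← zpow_add] at h3
    refine ⟨(n + N).toNat, ?_⟩
    rw [Set.mem_setOf_eq, ← zpow_natCast_apply_aux, Int.toNat_of_nonneg (by omega)]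
    exact h3
  have hM : ∀ x, {j : ℕ | 0 < j ∧ (⇑f.symm)^[j] x ∈ interior K}.Nonempty := by
    intro x
    obtain ⟨n, h1, h2, h3⟩ := hN ((f.toEquiv ^ (-(N : ℤ) - 1)) x)
    rw [← Equiv.Perm.mul_apply, ← zpow_add] at h3
    refine ⟨(-(n + (-(N : ℤ) - 1))).toNat, by omega, ?_⟩
    rw [← zpow_neg_apply_aux, Int.toNat_of_nonneg (by omega), neg_neg]
    exact h3
  have hp : ∀ x, (f.toEquiv ^ (ellPlus f K x : ℤ)) x ∈ interior K := by
    intro x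
    rw [zpow_natCast_apply_aux]
    exact Nat.sInf_mem (hP x)
  have hm : ∀ x, 0 < ellMinus f K x ∧ (f.toEquiv ^ (-(ellMinus f K x : ℤ))) x ∈ interior K := by
    intro x
    rw [zpow_neg_apply_aux]
    exact Nat.sInf_mem (hM x)
  -- no visit to the interior strictly in between
  have hnot : ∀ j : ℤ, -(ellMinus f K x : ℤ) < j → j < ellPlus f K x →
      (f.toEquiv ^ j) x ∉ interior K := by
    intro j h1 h2 h3
    obtain ⟨k, rfl | rfl⟩ := j.eq_nat_or_neg
    · rw [zpow_natCast_apply_aux] at h3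
      have : ellPlus f K x ≤ k := Nat.sInf_le h3
      omega
    · rcases Nat.eq_zero_or_pos k with rfl | hk
      · have h4 : (⇑f)^[0] x ∈ interior K := by simpa using h3
        have : ellPlus f K x ≤ 0 := Nat.sInf_le h4
        simp at h2
        omega
      · rw [zpow_neg_apply_aux] at h3
        have : ellMinus f K x ≤ k := Nat.sInf_le ⟨hk, h3⟩
        omega
  have hfin : (Lset f K x).Finite :=
    (Set.finite_Ioo (-(ellMinus f K x : ℤ)) (ellPlus f K x)).subset fun j hj => ⟨hj.1, hj.2.1⟩
  let S : Set ℤ := Set.Ioo (-(ellMinus f K x : ℤ)) (ellPlus f K x) \ Lset f K x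
  have hS : S.Finite := (Set.finite_Ioo _ _).diff
  have hKcl : IsClosed K := hKc.isClosed
  refine ⟨((fun y => (f.toEquiv ^ (ellPlus f K x : ℤ)) y) ⁻¹' interior K ∩
    (fun y => (f.toEquiv ^ (-(ellMinus f K x : ℤ))) y) ⁻¹' interior K) ∩
    ⋂ j ∈ S, (fun y => (f.toEquiv ^ j) y) ⁻¹' Kᶜ, ?_, ?_, ?_⟩
  · exact ((isOpen_interior.preimage (zpow_continuous_aux f _)).inter
      (isOpen_interior.preimage (zpow_continuous_aux f _))).inter
      (hS.isOpen_biInter fun j _ => hKcl.isOpen_compl.preimage (zpow_continuous_aux f j))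
  · refine ⟨⟨hp x, (hm x).2⟩, Set.mem_iInter₂.2 ?_⟩
    rintro j ⟨⟨h1, h2⟩, h3⟩ h4
    refine h3 ⟨h1, h2, ?_⟩
    rw [hKcl.frontier_eq]
    exact ⟨h4, hnot j h1 h2⟩
  · rintro y ⟨⟨⟨hy1, hy2⟩, hy3⟩, hy4, hy5⟩
    have hyS : ∀ j ∈ S, (f.toEquiv ^ j) y ∉ K := fun j hj => Set.mem_iInter₂.1 hy3 j hj
    have hle : ellPlus f K y ≤ ellPlus f K x := by
      refine Nat.sInf_le ?_
      rw [Set.mem_setOf_eq, ← zpow_natCast_apply_aux]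
      exact hy1
    have hle' : ellMinus f K y ≤ ellMinus f K x := by
      refine Nat.sInf_le ⟨(hm x).1, ?_⟩
      rw [← zpow_neg_apply_aux]
      exact hy2
    have hsub : Lset f K y ⊆ Lset f K x := by
      rintro j ⟨h1, h2, h3⟩
      by_contra h
      exact hyS j ⟨⟨by omega, by omega⟩, h⟩ (hKcl.frontier_subset h3)
    have hcard : (Lset f K x).ncard ≤ (Lset f K y).ncard := by
      have h1 : ¬ (i + 1 ≤ (Lset f K x).ncard) := hx.2
      have h2 : i ≤ (Lset f K y).ncard := hy4
      omega
    have heq := Set.eq_of_subset_of_ncard_le hsub hcard hfin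
    by_contra hne
    have hq : (ellPlus f K y : ℤ) ∈ Lset f K x := by
      by_contra h
      have := (hm x).1
      exact hyS _ ⟨⟨by omega, by omega⟩, h⟩ (interior_subset (hp y))
    rw [← heq] at hq
    exact lt_irrefl _ hq.2.1
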